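/- Let n ≥ 4, d ≥ 1, and let H¹,...,Hᵈ be hermitian n × n complex matrices such that for every ξ ∈ ℝᵈ \ {0} the hermitian matrix ∑_{ℓ=1}^d ξ_ℓ Hℓ has at least 2 positive eigenvalues and at least 2 negative eigenvalues. On ℂⁿ × ℝᵈ consider the vector fields L̄_j = ∂/∂z̄_j − i ∑_{ℓ=1}^d ∑_{k=1}^n (Hℓ)_{kj} z_k ∂/∂x_ℓ, j = 1,...,n. If u : ℂⁿ × ℝᵈ → ℂ is a smooth compactly supported function satisfying L̄_j u = 0 for all j = 1,...,n, then u ≡ 0. -/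

import Mathlib

open MeasureTheory Complex Finset

noncomputable section

/-- Wirtinger derivative `∂u/∂z̄_j` in the `z` variables on `ℂⁿ × ℝᵈ`. -/
def wbarQ {n d : ℕ} (j : Fin n) (u : (Fin n → ℂ) × (Fin d → ℝ) → ℂ)
    (p : (Fin n → ℂ) × (Fin d → ℝ)) : ℂ :=
  (1 / 2 : ℂ) * (fderiv ℝ u p (Pi.single j 1, 0)
    + Complex.I * fderiv ℝ u p (Pi.single j Complex.I, 0))

/-- Wirtinger derivative `∂u/∂z_j` in the `z` variables on `ℂⁿ × ℝᵈ`. -/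
def wholQ {n d : ℕ} (j : Fin n) (u : (Fin n → ℂ) × (Fin d → ℝ) → ℂ)
    (p : (Fin n → ℂ) × (Fin d → ℝ)) : ℂ :=
  (1 / 2 : ℂ) * (fderiv ℝ u p (Pi.single j 1, 0)
    - Complex.I * fderiv ℝ u p (Pi.single j Complex.I, 0))

/-- The derivative `∂u/∂x_ℓ` in the real variables on `ℂⁿ × ℝᵈ`. -/
def dxQ {n d : ℕ} (ℓ : Fin d) (u : (Fin n → ℂ) × (Fin d → ℝ) → ℂ)
    (p : (Fin n → ℂ) × (Fin d → ℝ)) : ℂ :=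
  fderiv ℝ u p (0, Pi.single ℓ 1)

/-- The vector field `L̄_j = ∂/∂z̄_j − i ∑_ℓ ∑_k (Hℓ)_{kj} z_k ∂/∂x_ℓ`. -/
def LbarQ {n d : ℕ} (H : Fin d → Matrix (Fin n) (Fin n) ℂ) (j : Fin n)
    (u : (Fin n → ℂ) × (Fin d → ℝ) → ℂ) (p : (Fin n → ℂ) × (Fin d → ℝ)) : ℂ :=
  wbarQ j u p - Complex.I * ∑ ℓ, ∑ k, H ℓ k j * p.1 k * dxQ ℓ u p

/-- The vector field `L_j = ∂/∂z_j + i ∑_ℓ ∑_k (Hℓ)_{jk} z̄_k ∂/∂x_ℓ`. -/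
def LholQ {n d : ℕ} (H : Fin d → Matrix (Fin n) (Fin n) ℂ) (j : Fin n)
    (u : (Fin n → ℂ) × (Fin d → ℝ) → ℂ) (p : (Fin n → ℂ) × (Fin d → ℝ)) : ℂ :=
  wholQ j u p + Complex.I * ∑ ℓ, ∑ k, H ℓ j k * (starRingEnd ℂ) (p.1 k) * dxQ ℓ u p

/-- The weight `e^{|z|²}`. -/
def wgtQ {n d : ℕ} (p : (Fin n → ℂ) × (Fin d → ℝ)) : ℝ :=
  Real.exp (∑ j, Complex.normSq (p.1 j))

/-- `M` is 2-pseudoconcave: for every `ξ ≠ 0`, the hermitian matrix `∑ ℓ, ξ_ℓ Hℓ`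
has at least 2 positive and at least 2 negative eigenvalues (with multiplicity). -/
def TwoPseudoconcave {n d : ℕ} (H : Fin d → Matrix (Fin n) (Fin n) ℂ) : Prop :=
  ∀ ξ : Fin d → ℝ, ξ ≠ 0 →
    ∀ h : (∑ ℓ, ((ξ ℓ : ℂ)) • H ℓ).IsHermitian,
      2 ≤ (Finset.univ.filter fun i => 0 < h.eigenvalues i).card ∧
      2 ≤ (Finset.univ.filter fun i => h.eigenvalues i < 0).card

open scoped FourierTransform RealInnerProductSpace Topology

/-- The derivative of a compactly supported `C¹` function is bounded. -/
theorem fderiv_bounded_of_compact {E : Type*} [NormedAddCommGroup E] [NormedSpace ℝ E]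
    (g : E → ℂ) (hg : ContDiff ℝ 1 g) (hc : HasCompactSupport g) :
    ∃ C, ∀ p, ‖fderiv ℝ g p‖ ≤ C :=
  (hg.continuous_fderiv (by norm_num)).bounded_above_of_compact_support (hc.fderiv ℝ)

/-- If `g` is compactly supported and its `w̄`-derivative is a combination of `x`-derivatives
with coefficients depending on `w` only, then all fiber integrals of `g` vanish. -/
theorem fiber_integral_zero {V : Type*} [NormedAddCommGroup V] [InnerProductSpace ℝ V]
    [FiniteDimensional ℝ V] [MeasurableSpace V] [BorelSpace V] {ι : Type*} [Fintype ι]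
    (g : ℂ × V → ℂ) (hg : ContDiff ℝ 1 g) (hc : HasCompactSupport g)
    (b : ι → ℂ → ℂ) (e : ι → V)
    (h : ∀ w x, fderiv ℝ g (w, x) (1, 0) + I * fderiv ℝ g (w, x) (I, 0)
      = ∑ l, b l w * fderiv ℝ g (w, x) (0, e l)) (w : ℂ) : ∫ x, g (w, x) = 0 := by
  have hgd : Differentiable ℝ g := hg.differentiable (by norm_num)
  have hdc : Continuous (fderiv ℝ g) := hg.continuous_fderiv (by norm_num)
  set K : Set V := Prod.snd '' tsupport g with hK
  have hKc : IsCompact K := hc.isCompact.image continuous_snd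
  have hK0 : ∀ w x, x ∉ K → g (w, x) = 0 := fun w x hx =>
    image_eq_zero_of_notMem_tsupport fun hh => hx ⟨_, hh, rfl⟩
  have hK1 : ∀ w x, x ∉ K → fderiv ℝ g (w, x) = 0 := fun w x hx => by
    by_contra hne
    exact hx ⟨_, support_fderiv_subset ℝ hne, rfl⟩
  have hint : ∀ w, Integrable (fun x => g (w, x)) := fun w =>
    (hgd.continuous.comp (by fun_prop)).integrable_of_hasCompactSupport
      (HasCompactSupport.intro hKc (hK0 w))
  have hintv : ∀ w v, Integrable (fun x => fderiv ℝ g (w, x) v) := fun w v => by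
    refine Continuous.integrable_of_hasCompactSupport ?_
      (HasCompactSupport.intro hKc fun x hx => by simp [hK1 w x hx])
    have : Continuous fun x : V => fderiv ℝ g (w, x) := hdc.comp (by fun_prop)
    fun_prop
  obtain ⟨C, hC⟩ : ∃ C, ∀ p, ‖fderiv ℝ g p‖ ≤ C :=
    fderiv_bounded_of_compact g hg hc
  have hder : ∀ w, HasFDerivAt (fun w => ∫ x, g (w, x))
      (∫ x, (fderiv ℝ g (w, x)).comp (ContinuousLinearMap.inl ℝ ℂ V)) w := by
    intro w
    refine hasFDerivAt_integral_of_dominated_of_fderiv_le (s := Set.univ)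
      (F' := fun w x => (fderiv ℝ g (w, x)).comp (ContinuousLinearMap.inl ℝ ℂ V))
      (bound := K.indicator fun _ => C * ‖ContinuousLinearMap.inl ℝ ℂ V‖)
      Filter.univ_mem (Filter.Eventually.of_forall fun w => (hint w).aestronglyMeasurable)
      (hint w) ?_ ?_ ?_ ?_
    · refine Continuous.aestronglyMeasurable ?_
      have : Continuous fun x : V => fderiv ℝ g (w, x) := hdc.comp (by fun_prop)
      fun_prop
    · refine Filter.Eventually.of_forall fun x w _ => ?_
      by_cases hx : x ∈ K
      · rw [Set.indicator_of_mem hx]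
        exact (ContinuousLinearMap.opNorm_comp_le _ _).trans
          (mul_le_mul_of_nonneg_right (hC _) (norm_nonneg _))
      · simp [hK1 w x hx, Set.indicator_of_notMem hx]
    · exact (integrable_indicator_iff hKc.measurableSet).2
        (integrableOn_const hKc.measure_lt_top.ne)
    · refine Filter.Eventually.of_forall fun x w _ => ?_
      exact (hgd (w, x)).hasFDerivAt.comp w (hasFDerivAt_prodMk_left w x)
  have hinl : ∀ w, Integrable fun x => (fderiv ℝ g (w, x)).comp
      (ContinuousLinearMap.inl ℝ ℂ V) := fun w => by
    refine Continuous.integrable_of_hasCompactSupport ?_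
      (HasCompactSupport.intro hKc fun x hx => by simp [hK1 w x hx])
    have : Continuous fun x : V => fderiv ℝ g (w, x) := hdc.comp (by fun_prop)
    fun_prop
  have hx0 : ∀ w v, ∫ x, fderiv ℝ g (w, x) (0, v) = 0 := by
    intro w v
    have key := integral_bilinear_hasFDerivAt_right_eq_neg_left_of_integrable
      (μ := (volume : Measure V)) (f := fun _ : V => (1 : ℂ)) (f' := fun _ => 0)
      (g := fun x => g (w, x))
      (g' := fun x => (fderiv ℝ g (w, x)).comp (ContinuousLinearMap.inr ℝ ℂ V)) (v := v)
      (B := ContinuousLinearMap.mul ℝ ℂ) (by simp) (by simpa using hintv w (0, v))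
      (by simpa using hint w) (fun x _ => hasFDerivAt_const _ _)
      (fun x _ => (hgd (w, x)).hasFDerivAt.comp x (hasFDerivAt_prodMk_right w x))
    simpa using key
  have hdiff : Differentiable ℂ fun w => ∫ x, g (w, x) := by
    intro w
    refine differentiableAt_complex_iff_differentiableAt_real.2
      ⟨(hder w).differentiableAt, ?_⟩
    rw [(hder w).fderiv, ContinuousLinearMap.integral_apply (hinl w),
      ContinuousLinearMap.integral_apply (hinl w)]
    simp only [ContinuousLinearMap.comp_apply, ContinuousLinearMap.inl_apply, smul_eq_mul]
    have h2 : (∫ x, fderiv ℝ g (w, x) (1, 0)) + I * ∫ x, fderiv ℝ g (w, x) (I, 0) = 0 := by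
      rw [← integral_const_mul, ← integral_add (hintv _ _) ((hintv _ _).const_mul _)]
      simp_rw [h]
      rw [integral_finsetSum _ fun l _ => (hintv _ _).const_mul _]
      simp [integral_const_mul, hx0]
    linear_combination (-I) * h2 + (∫ x, fderiv ℝ g (w, x) (I, 0)) * I_sq
  refine hdiff.apply_eq_of_tendsto_cocompact w ?_
  have hcs : HasCompactSupport fun w => ∫ x, g (w, x) := by
    refine HasCompactSupport.intro (hc.isCompact.image continuous_fst) fun w hw => ?_
    have : ∀ x, g (w, x) = 0 := fun x =>
      image_eq_zero_of_notMem_tsupport fun hh => hw ⟨_, hh, rfl⟩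
    simp [this]
  exact tendsto_const_nhds.congr' (hcs.isCompact.compl_mem_cocompact |> fun hm => by
    filter_upwards [hm] with w hw
    exact (image_eq_zero_of_notMem_tsupport hw).symm)

theorem no_compactly_supported_CR_functions_general (n d : ℕ) (hn : 4 ≤ n) (hd : 1 ≤ d)
    (H : Fin d → Matrix (Fin n) (Fin n) ℂ)
    (hH : ∀ ℓ, (H ℓ).IsHermitian) (hpc : TwoPseudoconcave H)
    (u : (Fin n → ℂ) × (Fin d → ℝ) → ℂ)
    (hu : ContDiff ℝ (⊤ : ℕ∞) u) (hucs : HasCompactSupport u)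
    (hCR : ∀ (j : Fin n) (p : (Fin n → ℂ) × (Fin d → ℝ)), LbarQ H j u p = 0) :
    u = 0 := by
  have hud : Differentiable ℝ u := hu.differentiable (by simp)
  let j : Fin n := ⟨0, by omega⟩
  funext ⟨z, x0⟩
  -- the affine slice
  let A : ℂ × (EuclideanSpace ℝ (Fin d)) → (Fin n → ℂ) × (Fin d → ℝ) :=
    fun p => (z + Pi.single j p.1, WithLp.ofLp p.2)
  let AL : ℂ × (EuclideanSpace ℝ (Fin d)) →L[ℝ] (Fin n → ℂ) × (Fin d → ℝ) :=
    ((ContinuousLinearMap.single ℝ (fun _ : Fin n => ℂ) j).prodMap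
      (EuclideanSpace.equiv (Fin d) ℝ).toContinuousLinearMap)
  have hAeq : A = fun p => (z, 0) + AL p := by
    funext p
    ext <;> simp [A, AL]
  have hA : ∀ p, HasFDerivAt A AL p := fun p => by
    rw [hAeq]; exact AL.hasFDerivAt.const_add _
  have hAs : ContDiff ℝ 1 A := by
    rw [hAeq]; exact contDiff_const.add AL.contDiff
  let B : (Fin n → ℂ) × (Fin d → ℝ) → ℂ × (EuclideanSpace ℝ (Fin d)) := fun q => (q.1 j - z j, WithLp.toLp 2 q.2)
  have hB : Continuous B := by fun_prop
  have hBA : ∀ p, B (A p) = p := fun p => by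
    ext <;> simp [A, B]
  let c0 : Fin d → ℂ := fun l => ∑ k, H l k j * z k
  have hcz : ∀ l w, ∑ k, H l k j * (z + Pi.single j w : Fin n → ℂ) k = c0 l + H l j j * w := by
    intro l w
    simp [c0, mul_add, Finset.sum_add_distrib, Pi.single_apply]
  have hF : 𝓕 (fun x : (EuclideanSpace ℝ (Fin d)) => u (z, WithLp.ofLp x)) = 0 := by
    funext ξ
    rw [Real.fourier_eq']
    let Φ : ℂ × (EuclideanSpace ℝ (Fin d)) → ℂ := fun p => (((-2 * Real.pi * ⟪p.2, ξ⟫ : ℝ)) : ℂ) * I +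
      2 * Real.pi * ∑ l, (ξ l : ℂ) * (c0 l * (starRingEnd ℂ) p.1
        + H l j j * (p.1 * (starRingEnd ℂ) p.1))
    let T1 : ℂ × (EuclideanSpace ℝ (Fin d)) →L[ℝ] ℂ := Complex.ofRealCLM.comp
      ((-2 * Real.pi) • ((innerSL ℝ ξ).comp (ContinuousLinearMap.snd ℝ ℂ (EuclideanSpace ℝ (Fin d)))))
    let Cj : ℂ × (EuclideanSpace ℝ (Fin d)) →L[ℝ] ℂ := (Complex.conjCLE.toContinuousLinearMap).comp
      (ContinuousLinearMap.fst ℝ ℂ (EuclideanSpace ℝ (Fin d)))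
    let P : ℂ × (EuclideanSpace ℝ (Fin d)) →L[ℝ] ℂ := ContinuousLinearMap.fst ℝ ℂ (EuclideanSpace ℝ (Fin d))
    have hΦeq : Φ = fun p => T1 p * I + 2 * Real.pi * ∑ l, (ξ l : ℂ) * (c0 l * Cj p
        + H l j j * (P p * Cj p)) := by
      funext p
      simp [Φ, T1, Cj, P, real_inner_comm]
    have hΦs : ContDiff ℝ 1 Φ := by
      rw [hΦeq]
      fun_prop
    have hΦd : ∀ p q, fderiv ℝ Φ p q = T1 q * I + 2 * Real.pi * ∑ l, (ξ l : ℂ) * (c0 l * Cj q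
        + H l j j * (P p * Cj q + P q * Cj p)) := by
      intro p q
      have hT1 : HasFDerivAt (fun p => T1 p) T1 p := T1.hasFDerivAt
      have hP : HasFDerivAt (fun p => P p) P p := P.hasFDerivAt
      have hCj : HasFDerivAt (fun p => Cj p) Cj p := Cj.hasFDerivAt
      have h1 := (hT1.mul_const I).add ((HasFDerivAt.fun_sum (u := Finset.univ)
        fun (l : Fin d) _ => ((hCj.const_mul (c0 l)).add
          ((hP.mul hCj).const_mul (H l j j))).const_mul (ξ l : ℂ)).const_mul
            (2 * Real.pi : ℂ))
      have h2 : HasFDerivAt Φ (I • T1 + (2 * Real.pi : ℂ) • ∑ i, (ξ i : ℂ) •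
          (c0 i • Cj + H i j j • (P p • Cj + Cj p • P))) p := by
        rw [hΦeq]; exact h1
      rw [h2.fderiv]
      simp
      rw [mul_comm I]
      congr 2
      refine Finset.sum_congr rfl fun l _ => ?_
      ring
    let g : ℂ × (EuclideanSpace ℝ (Fin d)) → ℂ := fun p => Complex.exp (Φ p) * u (A p)
    have hgs : ContDiff ℝ 1 g :=
      hΦs.cexp.mul ((hu.of_le (by exact_mod_cast le_top)).comp hAs)
    have hgc : HasCompactSupport g := by
      refine HasCompactSupport.intro (hucs.isCompact.image hB) fun p hp => ?_
      have : u (A p) = 0 := image_eq_zero_of_notMem_tsupport fun hh => hp ⟨_, hh, hBA p⟩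
      simp [g, this]
    have hgd : ∀ p q, fderiv ℝ g p q =
        Complex.exp (Φ p) * (fderiv ℝ u (A p) (AL q) + u (A p) * fderiv ℝ Φ p q) := by
      intro p q
      have h1 : HasFDerivAt g _ p :=
        ((hΦs.differentiable (by norm_num) p).hasFDerivAt.cexp).mul
          ((hud (A p)).hasFDerivAt.comp p (hA p))
      rw [h1.fderiv]
      simp
      ring
    have hz := fiber_integral_zero g hgs hgc
      (fun l w => 2 * I * (c0 l + H l j j * w)) (fun l => EuclideanSpace.single l 1) ?_ 0
    · simpa [g, Φ, A] using hz
    · intro w x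
      have hcr := hCR j (A (w, x))
      have e1 : AL (1, 0) = (Pi.single j 1, 0) := by ext <;> simp [AL]
      have e2 : AL (I, 0) = (Pi.single j I, 0) := by ext <;> simp [AL]
      have e3 : ∀ l, AL (0, EuclideanSpace.single l 1) = (0, Pi.single l 1) := fun l => by
        ext <;> simp [AL, Pi.single_apply]
      simp only [LbarQ, wbarQ, dxQ, ← Finset.sum_mul] at hcr
      simp only [A, hcz] at hcr
      have hT : ∀ l, T1 (0, EuclideanSpace.single l 1) = -2 * Real.pi * ξ l := fun l => by
        simp [T1, EuclideanSpace.inner_single_right]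
      simp only [hgd, hΦd, e1, e2, e3, hT]
      have t1 : T1 (1, 0) = 0 := by simp [T1]
      have t2 : T1 (I, 0) = 0 := by simp [T1]
      have k1 : Cj (1, 0) = 1 := by simp [Cj]
      have k2 : Cj (I, 0) = -I := by simp [Cj]
      have k3 : ∀ y, Cj (0, y) = 0 := fun y => by simp [Cj]
      have p1 : P (1, 0) = 1 := rfl
      have p2 : P (I, 0) = I := rfl
      have p3 : ∀ y, P (0, y) = 0 := fun y => rfl
      have p4 : P (w, x) = w := rfl
      simp only [t1, t2, k1, k2, k3, p1, p2, p3, p4, mul_zero, zero_mul, add_zero, zero_add,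
        Finset.sum_const_zero]
      have r1 : ∀ D : Fin d → ℂ, ∑ l, 2 * I * (c0 l + H l j j * w) * (Complex.exp (Φ (w, x)) *
          (D l + u (A (w, x)) * (-2 * Real.pi * ξ l * I)))
          = Complex.exp (Φ (w, x)) * (2 * (I * ∑ l, (c0 l + H l j j * w) * D l)
            + u (A (w, x)) * (4 * Real.pi * ∑ l, ξ l * (c0 l + H l j j * w))) := by
        intro D
        simp only [Finset.mul_sum, ← Finset.sum_add_distrib]
        refine Finset.sum_congr rfl fun l _ => ?_
        linear_combination (-4 * Real.pi * ξ l * (c0 l + H l j j * w) *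
          Complex.exp (Φ (w, x)) * u (A (w, x))) * I_sq
      have r2 : (∑ l, (ξ l : ℂ) * (c0 l * 1 + H l j j * (w * 1 + 1 * Cj (w, x))))
          + I * (∑ l, (ξ l : ℂ) * (c0 l * -I + H l j j * (w * -I + I * Cj (w, x))))
          = 2 * ∑ l, (ξ l : ℂ) * (c0 l + H l j j * w) := by
        simp only [Finset.mul_sum, ← Finset.sum_add_distrib]
        refine Finset.sum_congr rfl fun l _ => ?_
        linear_combination ((ξ l : ℂ) * (-c0 l - H l j j * w + H l j j * Cj (w, x))) * I_sq
      simp only [mul_one] at r2 ⊢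
      rw [r1]
      simp only [A]
      linear_combination (2 * Complex.exp (Φ (w, x))) * hcr + (Complex.exp (Φ (w, x)) *
        u (z + Pi.single j w, WithLp.ofLp x) * (2 * Real.pi)) * r2
  have hcont : Continuous (fun x : (EuclideanSpace ℝ (Fin d)) => u (z, WithLp.ofLp x)) :=
    hud.continuous.comp (by fun_prop)
  have hcs : HasCompactSupport (fun x : (EuclideanSpace ℝ (Fin d)) => u (z, WithLp.ofLp x)) := by
    refine HasCompactSupport.intro ((hucs.isCompact.image hB).image continuous_snd)
      fun x hx => ?_
    exact image_eq_zero_of_notMem_tsupport fun hh => hx ⟨_, ⟨_, hh, rfl⟩, by simp [B]⟩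
  have hinv := hcont.fourierInv_fourier_eq (hcont.integrable_of_hasCompactSupport hcs)
    (by rw [hF]; exact integrable_zero _ _ _)
  have := congrFun hinv (WithLp.toLp 2 x0)
  rw [hF] at this
  simpa [Real.fourierInv_eq'] using this.symm
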